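/- arXiv:2109.00117 — 2 statements merged into one kernel-verified Lean document; each statement's English description precedes it below -/
import Mathlib

section
/- Let n ≥ 1 and let T be a nonzero state reachable from ₀(n) by Bergman moves in which every entry is 0 or 1. Let i₀ be the least index with T i₀ = 1, and suppose that (i₀ : ℝ) ≤ −L for some real L ≥ log_φ n + 3. Set z = ⌊(L − log_φ n − 3)/2⌋. Then T(i₀ + 1) = 1, and for every integer j with 1 ≤ j ≤ z one has T(i₀ + 2j − 1) = 1 and T(i₀ + 2j) = 0; that is, the left edge of T has the form 110101…10 with z zeros, and moreover each such index i₀ + 2j is negative. -/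
noncomputable section

/-- The golden ratio. -/
def phi : ℝ := (1 + Real.sqrt 5) / 2

/-- Base-φ logarithm. -/
def logphi (x : ℝ) : ℝ := Real.logb phi x

/-- A Bergman state: a finitely supported function from ℤ to ℕ. -/
abbrev BState := ℤ →₀ ℕ

/-- A split move at index `i`. -/
def SplitAt (S S' : BState) (i : ℤ) : Prop :=
  2 ≤ S i ∧
    S' = S - Finsupp.single i 2 + Finsupp.single (i + 1) 1 + Finsupp.single (i - 2) 1

/-- A combine move at index `i`. -/
def CombineAt (S S' : BState) (i : ℤ) : Prop :=
  1 ≤ S i ∧ 1 ≤ S (i + 1) ∧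
    S' = S - Finsupp.single i 1 - Finsupp.single (i + 1) 1 + Finsupp.single (i + 2) 1

/-- A move is a split or a combine. -/
def Move (S S' : BState) : Prop := (∃ i, SplitAt S S' i) ∨ (∃ i, CombineAt S S' i)

/-- Terminal state: no move is legal. -/
def Terminal (S : BState) : Prop :=
  (∀ i, S i ≤ 1) ∧ ∀ i, ¬(1 ≤ S i ∧ 1 ≤ S (i + 1))

/-- A Bergman game of length `m` from `S`. -/
def Game (S : BState) (m : ℕ) (g : ℕ → BState) : Prop :=
  g 0 = S ∧ ∀ j < m, Move (g j) (g (j + 1))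

/-- A complete Bergman game of length `m` from `S`. -/
def CompleteGame (S : BState) (m : ℕ) (g : ℕ → BState) : Prop :=
  Game S m g ∧ Terminal (g m)

/-- Reachability by a finite sequence of moves. -/
def Reachable : BState → BState → Prop := Relation.ReflTransGen Move

/-- Reachability by split moves only. -/
def SplitReachable : BState → BState → Prop :=
  Relation.ReflTransGen fun S S' => ∃ i, SplitAt S S' i

/-- The initial state `₀(n)`: `n` chips at index 0. -/
def initState (n : ℕ) : BState := Finsupp.single 0 n

/-- Total number of chips in a state. -/
def chips (S : BState) : ℕ := S.sum fun _ c => c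

open Classical in
/-- The number of split moves among the first `m` steps of `g`. -/
def splitCount (g : ℕ → BState) (m : ℕ) : ℕ :=
  ((Finset.range m).filter fun j => ∃ i, SplitAt (g j) (g (j + 1)) i).card

open Classical in
/-- The number of combine moves among the first `m` steps of `g`. -/
def combineCount (g : ℕ → BState) (m : ℕ) : ℕ :=
  ((Finset.range m).filter fun j => ∃ i, CombineAt (g j) (g (j + 1)) i).card


def psiR : ℝ := 1 - phi

lemma phi_sq_aux : phi ^ 2 = phi + 1 := by
  unfold phi
  have := Real.sq_sqrt (show (0:ℝ) ≤ 5 by norm_num)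
  nlinarith

lemma phi_gt_one_aux : 1 < phi := by
  unfold phi
  have : (1:ℝ) < Real.sqrt 5 := by
    rw [Real.lt_sqrt] <;> norm_num
  linarith

lemma psi_sq_aux : psiR ^ 2 = psiR + 1 := by
  have := phi_sq_aux
  unfold psiR
  nlinarith

lemma psi_ne_aux : psiR ≠ 0 := by
  have := phi_gt_one_aux
  unfold psiR
  intro h
  linarith

lemma psi_inv_aux : -psiR = phi⁻¹ := by
  have := phi_gt_one_aux
  have h2 := phi_sq_aux
  refine eq_inv_of_mul_eq_one_left ?_
  unfold psiR
  nlinarith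

def valP (S : BState) : ℝ := S.sum fun i c => (c : ℝ) * psiR ^ i

lemma valP_add (S S' : BState) : valP (S + S') = valP S + valP S' := by
  unfold valP
  apply Finsupp.sum_add_index'
  · intro a; simp
  · intro a b c; push_cast; ring

lemma valP_single (i : ℤ) (c : ℕ) : valP (Finsupp.single i c) = c * psiR ^ i := by
  unfold valP
  simp

lemma valP_move (S S' : BState) (h : Move S S') : valP S' = valP S := by
  have hp := psi_sq_aux
  have h0 := psi_ne_aux
  rcases h with ⟨i, h1, h2⟩ | ⟨i, h1, h1', h2⟩
  · have e : S = (S - Finsupp.single i 2) + Finsupp.single i 2 := by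
      rw [tsub_add_cancel_of_le]
      simpa using h1
    rw [h2]
    conv_rhs => rw [e]
    simp only [valP_add, valP_single]
    have e1 : psiR ^ i = psiR ^ (i - 2) * psiR ^ 2 := by
      rw [← zpow_natCast, ← zpow_add₀ h0]; norm_num
    have e2 : psiR ^ (i + 1) = psiR ^ (i - 2) * psiR ^ 3 := by
      rw [← zpow_natCast, ← zpow_add₀ h0]; congr 1; push_cast; ring
    rw [e1, e2]
    push_cast
    linear_combination psiR ^ (i - 2) * (psiR - 1) * hp
  · have e : S = (S - Finsupp.single i 1 - Finsupp.single (i + 1) 1)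
        + (Finsupp.single (i + 1) 1 + Finsupp.single i 1) := by
      rw [← add_assoc, tsub_add_cancel_of_le, tsub_add_cancel_of_le]
      · simpa using h1
      · simpa using h1'
    rw [h2]
    conv_rhs => rw [e]
    simp only [valP_add, valP_single]
    have e1 : psiR ^ (i + 2) = psiR ^ i * psiR ^ 2 := by
      rw [← zpow_natCast, ← zpow_add₀ h0]; norm_num
    have e2 : psiR ^ (i + 1) = psiR ^ i * psiR := zpow_add_one₀ h0 i
    rw [e1, e2]
    push_cast
    linear_combination psiR ^ i * hp

lemma valP_reach (S S' : BState) (h : Reachable S S') : valP S' = valP S := by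
  induction h with
  | refl => rfl
  | tail _ h ih => rw [valP_move _ _ h, ih]

lemma odd_sum_aux (M : ℕ) :
    ∑ k ∈ Finset.range (2 * M), (if Odd k then psiR ^ k else 0) = psiR ^ (2 * M) - 1 := by
  induction M with
  | zero => simp
  | succ M ih =>
    rw [show 2 * (M + 1) = 2 * M + 1 + 1 by ring, Finset.sum_range_succ, Finset.sum_range_succ, ih]
    rw [if_neg (by simp), if_pos (by simp)]
    linear_combination (-psiR ^ (2 * M)) * psi_sq_aux

lemma key_aux (T : BState) (h01 : ∀ i, T i ≤ 1) (i₀ : ℤ) (hi₀ : T i₀ = 1)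
    (hleast : ∀ j < i₀, T j = 0) (k : ℕ) (hk : 1 ≤ k)
    (hbad : (Odd k ∧ T (i₀ + k) = 0) ∨ (Even k ∧ T (i₀ + k) = 1)) :
    (phi⁻¹) ^ k ≤ |valP T| * phi ^ i₀ := by
  have hphi := phi_gt_one_aux
  have hr : 0 < -psiR := by rw [psi_inv_aux]; positivity
  obtain ⟨B, hB⟩ : ∃ B : ℕ, ∀ i ∈ T.support, i < i₀ + B := by
    obtain ⟨b, hb⟩ := T.support.bddAbove
    refine ⟨(b - i₀ + 1).toNat, fun i hi => ?_⟩
    have : i ≤ b := hb hi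
    omega
  set M := B + k + 1 with hM
  have hv : valP T = psiR ^ i₀ * ∑ j ∈ Finset.range (2 * M), (T (i₀ + j) : ℝ) * psiR ^ j := by
    have hinj : Set.InjOn (fun j : ℕ => i₀ + (j : ℤ)) (Finset.range (2 * M) : Set ℕ) := by
      intro a _ b _ h
      simpa using h
    unfold valP
    rw [Finsupp.sum_of_support_subset T
      (s := (Finset.range (2 * M)).image (fun j : ℕ => i₀ + (j : ℤ))) _ _ (by simp),
      Finset.sum_image hinj, Finset.mul_sum]
    · refine Finset.sum_congr rfl fun j _ => ?_
      rw [zpow_add₀ psi_ne_aux, zpow_natCast]; ring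
    · intro i hi
      have h1 := hB i hi
      have h2 : ¬ i < i₀ := fun h => (Finsupp.mem_support_iff.1 hi) (hleast i h)
      simp only [Finset.mem_image, Finset.mem_range]
      exact ⟨(i - i₀).toNat, by omega, by omega⟩
  set A := ∑ j ∈ Finset.range (2 * M), (T (i₀ + j) : ℝ) * psiR ^ j with hA
  have hA' : (-psiR) ^ k ≤ A := by
    let b : ℕ → ℝ := fun j => (T (i₀ + j) : ℝ) * psiR ^ j - (if Odd j then psiR ^ j else 0)
    have hbs : ∑ j ∈ Finset.range (2 * M), b j = A - (psiR ^ (2 * M) - 1) := by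
      simp only [b]
      rw [Finset.sum_sub_distrib, odd_sum_aux]
    have hb0 : ∀ j, 0 ≤ b j := by
      intro j
      have hp : 0 ≤ (-psiR) ^ j := by positivity
      have h1 : (T (i₀ + j) : ℝ) ≤ 1 := by exact_mod_cast h01 _
      have h0 : (0:ℝ) ≤ (T (i₀ + j) : ℝ) := by positivity
      simp only [b]
      rcases Nat.even_or_odd j with h | h
      · rw [h.neg_pow] at hp
        rw [if_neg (by simpa using h)]
        nlinarith
      · rw [h.neg_pow] at hp
        rw [if_pos h]
        nlinarith
    have hbk : b k = (-psiR) ^ k := by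
      simp only [b]
      rcases hbad with ⟨h, h'⟩ | ⟨h, h'⟩
      · rw [if_pos h, h', h.neg_pow]; simp
      · rw [if_neg (by simpa using h), h', h.neg_pow]; simp
    have hb00 : b 0 = 1 := by simp [b, hi₀]
    have hle : b 0 + b k ≤ ∑ j ∈ Finset.range (2 * M), b j := by
      rw [← Finset.sum_pair (show (0:ℕ) ≠ k by omega)]
      apply Finset.sum_le_sum_of_subset_of_nonneg
      · intro x hx
        simp only [Finset.mem_insert, Finset.mem_singleton] at hx
        simp only [Finset.mem_range]
        omega
      · intro j _ _; exact hb0 j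
    have : 0 ≤ psiR ^ (2 * M) := (even_two_mul M).pow_nonneg _
    linarith
  have habs : |psiR| = phi⁻¹ := by
    rw [← psi_inv_aux, abs_of_neg (by linarith)]
  have hpz : 0 < phi ^ i₀ := by positivity
  rw [hv, abs_mul, abs_zpow, habs, inv_zpow, ← psi_inv_aux]
  calc (-psiR) ^ k ≤ A := hA'
    _ ≤ |A| := le_abs_self A
    _ = _ := by field_simp

lemma key2_aux (n : ℕ) (hn : 1 ≤ n)
    (T : BState) (hT : Reachable (initState n) T)
    (h01 : ∀ i, T i ≤ 1)
    (i₀ : ℤ) (hi₀ : T i₀ = 1) (hleast : ∀ j < i₀, T j = 0)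
    (k : ℕ) (hk : 1 ≤ k)
    (hbad : (Odd k ∧ T (i₀ + k) = 0) ∨ (Even k ∧ T (i₀ + k) = 1)) :
    -(i₀ : ℝ) - k ≤ logphi n := by
  have hphi := phi_gt_one_aux
  have h := key_aux T h01 i₀ hi₀ hleast k hk hbad
  have hn' : (0:ℝ) < n := by exact_mod_cast hn
  rw [valP_reach _ _ hT, initState, valP_single, zpow_zero, mul_one, abs_of_pos hn'] at h
  unfold logphi
  rw [Real.le_logb_iff_rpow_le hphi hn']
  have e : phi ^ (-(i₀ : ℝ) - k) = (phi⁻¹) ^ k * (phi ^ i₀)⁻¹ := by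
    rw [Real.rpow_sub (by positivity), Real.rpow_neg (by positivity), Real.rpow_intCast,
      Real.rpow_natCast, inv_pow]
    field_simp
  rw [e]
  have hpz : 0 < phi ^ i₀ := by positivity
  rwa [mul_inv_le_iff₀ hpz]

/-- If `T` is a nonzero 0-1 state reachable from `₀(n)` whose least occupied index `i₀`
satisfies `i₀ ≤ −L` with `L ≥ log_φ n + 3`, and `z = ⌊(L − log_φ n − 3)/2⌋`, then the left
edge of `T` has the form `110101…10` with `z` zeros, each such zero at a negative index. -/
theorem bergman_left_edge_zeros (n : ℕ) (hn : 1 ≤ n)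
    (T : BState) (hT : Reachable (initState n) T) (hT0 : T ≠ 0)
    (h01 : ∀ i, T i ≤ 1)
    (i₀ : ℤ) (hi₀ : T i₀ = 1) (hleast : ∀ j < i₀, T j = 0)
    (L : ℝ) (hL : logphi n + 3 ≤ L) (hpos : (i₀ : ℝ) ≤ -L)
    (z : ℤ) (hz : z = ⌊(L - logphi n - 3) / 2⌋) :
    T (i₀ + 1) = 1 ∧
      ∀ j : ℤ, 1 ≤ j → j ≤ z →
        T (i₀ + 2 * j - 1) = 1 ∧ T (i₀ + 2 * j) = 0 ∧ i₀ + 2 * j < 0 := by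
  have hlog : 0 ≤ logphi n :=
    Real.logb_nonneg phi_gt_one_aux (by exact_mod_cast hn)
  have key : ∀ k : ℕ, 1 ≤ k → (k : ℝ) < L - logphi n →
      (Odd k → T (i₀ + k) = 1) ∧ (Even k → T (i₀ + k) = 0) := by
    intro k hk hkL
    have h1 := h01 (i₀ + k)
    constructor
    · intro ho
      by_contra hne
      have := key2_aux n hn T hT h01 i₀ hi₀ hleast k hk (Or.inl ⟨ho, by omega⟩)
      linarith
    · intro he
      by_contra hne
      have := key2_aux n hn T hT h01 i₀ hi₀ hleast k hk (Or.inr ⟨he, by omega⟩)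
      linarith
  refine ⟨by simpa using (key 1 le_rfl (by push_cast; linarith)).1 odd_one, ?_⟩
  intro j hj hjz
  have hzr : (z : ℝ) ≤ (L - logphi n - 3) / 2 := by rw [hz]; exact Int.floor_le _
  have hjr : (j : ℝ) ≤ z := by exact_mod_cast hjz
  obtain ⟨m, rfl⟩ : ∃ m : ℕ, j = m + 1 := ⟨(j - 1).toNat, by omega⟩
  push_cast at hjr
  refine ⟨?_, ?_, ?_⟩
  · have := (key (2 * m + 1) (by omega) (by push_cast; linarith)).1 (by simp)
    rwa [show i₀ + 2 * ((m : ℤ) + 1) - 1 = i₀ + ((2 * m + 1 : ℕ) : ℤ) by push_cast; ring]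
  · have := (key (2 * m + 2) (by omega) (by push_cast; linarith)).2 ⟨m + 1, by ring⟩
    rwa [show i₀ + 2 * ((m : ℤ) + 1) = i₀ + ((2 * m + 2 : ℕ) : ℤ) by push_cast; ring]
  · have : ((i₀ + 2 * ((m : ℤ) + 1) : ℤ) : ℝ) < 0 := by push_cast; linarith
    exact_mod_cast this
end
end

section
/- For every Bergman state S with total chip count n = ∑_i S i, there exists a complete Bergman game from S (a finite sequence of legal moves ending in a terminal state) of length at most 4n. -/
noncomputable section

inductive Steps : ℕ → BState → BState → Prop
  | refl (S : BState) : Steps 0 S S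
  | cons {k : ℕ} {S T U : BState} : Move S T → Steps k T U → Steps (k + 1) S U

lemma Steps.trans {a b : ℕ} {S T U : BState} (h : Steps a S T) (h' : Steps b T U) :
    Steps (a + b) S U := by
  induction h with
  | refl S => simpa using h'
  | cons hm _ ih =>
    have := Steps.cons hm (ih h')
    rwa [Nat.add_right_comm]

lemma Steps.game {m : ℕ} {S T : BState} (h : Steps m S T) :
    ∃ g, Game S m g ∧ g m = T := by
  induction h with
  | refl S => exact ⟨fun _ => S, ⟨rfl, by simp⟩, rfl⟩
  | @cons k S T U hm _ ih =>
    obtain ⟨g, ⟨h0, hg⟩, hk⟩ := ih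
    refine ⟨fun j => Nat.casesOn j S g, ⟨rfl, ?_⟩, hk⟩
    intro j hj
    cases j with
    | zero => simpa [h0] using hm
    | succ j => exact hg j (by omega)

lemma move_split (S : BState) (i : ℤ) :
    Move (S + Finsupp.single i 2) (S + Finsupp.single (i + 1) 1 + Finsupp.single (i - 2) 1) := by
  left
  refine ⟨i, by simp, ?_⟩
  rw [add_tsub_cancel_right]

lemma move_combine (S : BState) (i : ℤ) :
    Move (S + Finsupp.single i 1 + Finsupp.single (i + 1) 1) (S + Finsupp.single (i + 2) 1) := by
  right
  refine ⟨i, by simp, by simp, ?_⟩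
  rw [add_right_comm, add_tsub_cancel_right, add_tsub_cancel_right]

lemma exists_add_single {S : BState} {i : ℤ} {c : ℕ} (h : c ≤ S i) :
    ∃ T : BState, S = T + Finsupp.single i c :=
  ⟨S - Finsupp.single i c, by
    rw [tsub_add_cancel_of_le]
    simpa using h⟩

lemma chips_add (S T : BState) : chips (S + T) = chips S + chips T := by
  unfold chips
  exact Finsupp.sum_add_index' (by simp) (by simp)

lemma chips_single (i : ℤ) (c : ℕ) : chips (Finsupp.single i c) = c := by
  unfold chips
  simp

lemma single_val (i j : ℤ) (c : ℕ) :
    (Finsupp.single i c : BState) j = if i = j then c else 0 := Finsupp.single_apply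

lemma insert_top (n : ℕ) : ∀ (U L : BState) (p : ℤ), chips U = n → Terminal U → U p = 0 →
    U (p - 1) = 0 → ∃ k U', Steps k (L + (U + Finsupp.single p 1)) (L + U') ∧ Terminal U' ∧
      chips U' + k = chips U + 1 ∧ ∀ i < p, U i = 0 → U' i = 0 := by
  induction n with
  | zero =>
    intro U L p hn hU h0 h1
    have hz : U = 0 := by
      ext i
      by_contra h
      obtain ⟨T, rfl⟩ := exists_add_single (Nat.one_le_iff_ne_zero.mpr h)
      rw [chips_add, chips_single] at hn
      omega
    subst hz
    refine ⟨0, _, Steps.refl _, ?_, by rw [chips_add, chips_single], ?_⟩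
    · constructor
      · intro i
        simp only [Finsupp.add_apply, Finsupp.coe_zero, Pi.zero_apply, single_val]
        split_ifs <;> omega
      · intro i
        simp only [Finsupp.add_apply, Finsupp.coe_zero, Pi.zero_apply, single_val]
        split_ifs <;> omega
    · intro i hi h
      simp only [Finsupp.add_apply, single_val, h]
      split_ifs <;> omega
  | succ n ih =>
    intro U L p hn hU h0 h1
    by_cases hp : U (p + 1) = 0
    · refine ⟨0, _, Steps.refl _, ?_, by simp [chips_add, chips_single], ?_⟩
      · constructor
        · intro i
          have := hU.1 i
          simp only [Finsupp.add_apply, single_val]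
          split_ifs with h
          · subst h; omega
          · omega
        · intro i
          have := hU.2 i
          simp only [Finsupp.add_apply, single_val]
          split_ifs with h h' h'
          · omega
          · subst h; omega
          · have : i = p - 1 := by omega
            subst this; omega
          · simpa using this
      · intro i hi h
        simp only [Finsupp.add_apply, single_val, h]
        split_ifs <;> omega
    · obtain ⟨T, rfl⟩ := exists_add_single (Nat.one_le_iff_ne_zero.mpr hp)
      have a1 := hU.1 (p + 1)
      have a2 := hU.2 (p + 1)
      simp only [Finsupp.add_apply, single_val] at a1 a2 h0 h1
      rw [chips_add, chips_single] at hn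
      have hT : Terminal T := by
        constructor
        · intro i
          have := hU.1 i
          simp only [Finsupp.add_apply] at this
          omega
        · intro i
          have := hU.2 i
          simp only [Finsupp.add_apply] at this
          omega
      have e : p + 1 + 1 = p + 2 := by ring
      rw [e] at a2
      have e' : p + 2 - 1 = p + 1 := by ring
      simp only [if_true] at a1 a2
      obtain ⟨k, U', hs, ht, hc, hz⟩ := ih T L (p + 2) (by omega) hT (by omega)
        (by rw [e']; omega)
      refine ⟨k + 1, U', Steps.cons ?_ hs, ht, ?_, ?_⟩
      · have := move_combine (L + T) p
        convert this using 1 <;> abel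
      · rw [chips_add, chips_single]; omega
      · intro i hi h
        simp only [Finsupp.add_apply] at h
        exact hz i (by omega) (by omega)

lemma main_aux (n : ℕ) : ∀ (L U : BState) (j : ℤ), chips L = n → Terminal U →
    (∀ i ≤ j, U i = 0) → (∀ i, j < i → L i = 0) →
    ∃ m T, Steps m (L + U) T ∧ Terminal T ∧ m ≤ chips U + 2 * n := by
  induction n with
  | zero =>
    intro L U j hn hU _ _
    have hz : L = 0 := by
      ext i
      by_contra h
      obtain ⟨T, rfl⟩ := exists_add_single (Nat.one_le_iff_ne_zero.mpr h)
      rw [chips_add, chips_single] at hn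
      omega
    subst hz
    exact ⟨0, U, by simpa using Steps.refl U, hU, by omega⟩
  | succ n ih =>
    intro L U j0 hn hU hUj0 hLj0
    have hne : L.support.Nonempty := by
      rw [Finsupp.support_nonempty_iff]
      rintro rfl
      simp [chips] at hn
    obtain ⟨j, hjs, hjm⟩ : ∃ j ∈ L.support, ∀ i ∈ L.support, i ≤ j :=
      ⟨_, L.support.max'_mem hne, fun i hi => L.support.le_max' i hi⟩
    rw [Finsupp.mem_support_iff] at hjs
    have hjj : j ≤ j0 := by
      by_contra h
      exact hjs (hLj0 j (by omega))
    have hUj : ∀ i ≤ j, U i = 0 := fun i hi => hUj0 i (by omega)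
    have hLj : ∀ i, j < i → L i = 0 := by
      intro i hi
      by_contra h
      have := hjm i (Finsupp.mem_support_iff.mpr h)
      omega
    clear hUj0 hLj0 hjm hjj hne
    by_cases hu : U (j + 1) = 0
    · by_cases ha : 2 ≤ L j
      · obtain ⟨M, rfl⟩ := exists_add_single ha
        rw [chips_add, chips_single] at hn
        obtain ⟨k, U', hs, ht, hc, hz⟩ := insert_top _ U (M + Finsupp.single (j - 2) 1) (j + 1)
          rfl hU hu (hUj _ (by omega))
        obtain ⟨m, T, hs', hT, hm⟩ := ih (M + Finsupp.single (j - 2) 1) U' j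
          (by rw [chips_add, chips_single]; omega) ht
          (fun i hi => hz i (by omega) (hUj i hi))
          (by
            intro i hi
            have := hLj i hi
            simp only [Finsupp.add_apply, single_val] at this ⊢
            rw [if_neg (by omega : ¬ j - 2 = i)]
            omega)
        refine ⟨k + m + 1, T, Steps.cons ?_ (hs.trans hs'), hT, by omega⟩
        have := move_split (M + U) j
        convert this using 1 <;> abel
      · obtain ⟨M, rfl⟩ := exists_add_single (Nat.one_le_iff_ne_zero.mpr hjs)
        rw [chips_add, chips_single] at hn
        simp only [Finsupp.add_apply, single_val, if_true] at ha
        obtain ⟨m, T, hs', hT, hm⟩ := ih M (U + Finsupp.single j 1) (j - 1) (by omega)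
          (by
            constructor
            · intro i
              have := hU.1 i
              simp only [Finsupp.add_apply, single_val]
              split_ifs with h
              · subst h; have := hUj j le_rfl; omega
              · omega
            · intro i
              have := hU.2 i
              simp only [Finsupp.add_apply, single_val]
              split_ifs with h h' h'
              · omega
              · subst h; omega
              · have := hUj i (by omega)
                omega
              · simpa using this)
          (by
            intro i hi
            have := hUj i (by omega)
            simp only [Finsupp.add_apply, single_val]
            rw [if_neg (by omega)]
            omega)
          (by
            intro i hi
            by_cases h : i = j
            · subst h; omega
            · have := hLj i (by omega)
              simp only [Finsupp.add_apply] at this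
              omega)
        rw [chips_add, chips_single] at hm
        refine ⟨m, T, ?_, hT, by omega⟩
        convert hs' using 1
        abel
    · obtain ⟨M, rfl⟩ := exists_add_single (Nat.one_le_iff_ne_zero.mpr hjs)
      obtain ⟨V, rfl⟩ := exists_add_single (Nat.one_le_iff_ne_zero.mpr hu)
      rw [chips_add, chips_single] at hn
      have a1 := hU.1 (j + 1)
      have a2 := hU.2 (j + 1)
      have e : j + 1 + 1 = j + 2 := by ring
      have e' : j + 2 - 1 = j + 1 := by ring
      rw [e] at a2
      simp only [Finsupp.add_apply, single_val, if_true] at a1 a2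
      have hV : Terminal V := by
        constructor
        · intro i
          have := hU.1 i
          simp only [Finsupp.add_apply] at this
          omega
        · intro i
          have := hU.2 i
          simp only [Finsupp.add_apply] at this
          omega
      obtain ⟨k, U', hs, ht, hc, hz⟩ := insert_top _ V M (j + 2)
          rfl hV (by omega) (by rw [e']; omega)
      obtain ⟨m, T, hs', hT, hm⟩ := ih M U' j (by omega) ht
          (by
            intro i hi
            have := hUj i hi
            simp only [Finsupp.add_apply] at this
            exact hz i (by omega) (by omega))
          (by
            intro i hi
            have := hLj i hi
            simp only [Finsupp.add_apply] at this
            omega)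
      rw [chips_add, chips_single]
      refine ⟨k + m + 1, T, Steps.cons ?_ (hs.trans hs'), hT, by omega⟩
      have := move_combine (M + V) j
      convert this using 1 <;> abel

/-- From any Bergman state with `n` chips there is a complete Bergman game of length at
most `4n`. -/
theorem bergman_short_game_exists (S : BState) :
    ∃ (m : ℕ) (g : ℕ → BState), CompleteGame S m g ∧ m ≤ 4 * chips S := by
  obtain ⟨j, hj⟩ : ∃ j : ℤ, ∀ i, j < i → S i = 0 := by
    obtain ⟨j, hj⟩ := S.support.bddAbove
    refine ⟨j, fun i hi => ?_⟩
    by_contra h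
    have := hj (Finset.mem_coe.mpr (Finsupp.mem_support_iff.mpr h))
    omega
  obtain ⟨m, T, hs, hT, hm⟩ := main_aux _ S 0 j rfl ⟨by simp, by simp⟩ (by simp) hj
  rw [add_zero] at hs
  obtain ⟨g, hg, rfl⟩ := hs.game
  refine ⟨m, g, ⟨hg, hT⟩, ?_⟩
  have : chips 0 = 0 := by simp [chips]
  omega
end
end
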